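/- Let n ≥ 2, 1 ≤ s ≤ n, let a₁,…,a_{s−1} be nonzero real numbers and b ∈ ℝ, and let L ⊆ ℝⁿ be the hyperplane parameterized by f(x₁,…,x_{n−1}) = (x₁,…,x_{n−1}, a₁x₁+⋯+a_{s−1}x_{s−1}+b). Then ω×(L) = max{n, (n/s)·σ((a₁,…,a_{s−1},b))}, where σ is applied to the vector (a₁,…,a_{s−1},b) ∈ ℝˢ. -/

import Mathlib

open Filter MeasureTheory Metric Set BigOperators

/-- Π×(q) = ∏_{i : qᵢ ≠ 0} |qᵢ| (empty product = 1). -/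
noncomputable def prodTimes {n : ℕ} (q : Fin n → ℤ) : ℝ :=
  ∏ i, if q i = 0 then 1 else |(q i : ℝ)|

/-- Multiplicative Diophantine exponent ω×(y): the sup (in the extended reals) of all
v ∈ ℝ such that there are infinitely many q ∈ ℤⁿ with |q·y + p| < Π×(q)^{-v/n}
for some p ∈ ℤ. -/
noncomputable def omegaT {n : ℕ} (y : Fin n → ℝ) : EReal :=
  sSup {w : EReal | ∃ v : ℝ, w = (v : EReal) ∧
    {q : Fin n → ℤ | ∃ p : ℤ, |(∑ i, (q i : ℝ) * y i) + (p : ℝ)| <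
      (prodTimes q) ^ (-(v / (n : ℝ)))}.Infinite}

/-- ω×(μ) for a measure: sup{v : μ{y : ω×(y) > v} > 0}. -/
noncomputable def omegaTMeas {n : ℕ} (μ : Measure (Fin n → ℝ)) : EReal :=
  sSup {w : EReal | ∃ v : ℝ, w = (v : EReal) ∧ 0 < μ {y | (v : EReal) < omegaT y}}

/-- σ(z) for a vector z ∈ ℝᵐ: sup of v such that for infinitely many q ∈ ℤ one has
max_i |q·zᵢ + pᵢ| < |q|^{-v} for some p ∈ ℤᵐ. -/
noncomputable def sigmaV {m : ℕ} (z : Fin m → ℝ) : EReal :=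
  sSup {w : EReal | ∃ v : ℝ, w = (v : EReal) ∧
    {q : ℤ | ∃ p : Fin m → ℤ, ∀ i, |(q : ℝ) * z i + (p i : ℝ)| < |(q : ℝ)| ^ (-v)}.Infinite}

/-!
Let `Q` be the last entry of `q` and `κ = linearPart α q`, so that
`q · (x, α · x + b) = κ · x + Q b`, and let `h` be the number of nonzero `αᵢ`. If `κ` is small, then
`qᵢ ≈ -Q αᵢ` and hence `Π×(q) ≍ |Q| ^ (h + 1)`. Rounding `Q α` therefore turns good approximations
`Q` of `(α, b)` into good multiplicative approximations `q` of `(x, α · x + b)`, for every `x`.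

Conversely, for `ε = Π×(q) ^ (-u)` with `u > 1`, the set of `x` in a fixed ball with `κ · x + Q b`
within `ε` of an integer has measure `O(ε (1 + 1 / ‖κ‖))`. The `q` with `‖κ‖ ≥ 1 / 2` contribute a
convergent series to the Borel–Cantelli lemma. If `‖κ‖ < 1 / 2`, then `Q` determines `q`, and, with
finitely many exceptions, either the set is empty or `‖κ‖` dominates the distance `‖Q θ‖` of
`Q (α, b)` to the integer lattice, where `θ` is the image of `(α, b)` in the torus. This leaves the
series `∑ |Q| ^ (-t) / ‖Q θ‖` with `t = (h + 1) u > 1`, which converges if `‖k θ‖ ≥ |k| ^ (-w)` for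
all large `|k|` and some `w < t`, because integers with comparably small `‖k θ‖` are far apart.
-/

lemma tendsto_abs_intCast_cofinite : Tendsto (fun k : ℤ => |(k : ℝ)|) cofinite atTop := by
  rw [← cocompact_eq_cofinite ℤ]
  exact tendsto_norm_cocompact_atTop

lemma eventually_mul_rpow_le_rpow {v w : ℝ} (hvw : v < w) (C : ℝ) :
    ∀ᶠ k : ℤ in cofinite, C * |(k : ℝ)| ^ v ≤ |(k : ℝ)| ^ w := by
  filter_upwards [((tendsto_rpow_atTop (sub_pos.2 hvw)).comp
    tendsto_abs_intCast_cofinite).eventually_ge_atTop C,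
    tendsto_abs_intCast_cofinite.eventually_gt_atTop 0] with k hC hk
  calc C * |(k : ℝ)| ^ v ≤ |(k : ℝ)| ^ (w - v) * |(k : ℝ)| ^ v := by gcongr; exact hC
    _ = |(k : ℝ)| ^ w := by rw [← Real.rpow_add hk, sub_add_cancel]

section Approximable

variable {G : Type*} [SeminormedAddCommGroup G] {θ : G} {v w : ℝ}

/-- `θ` is approximable to order `v` if `‖k θ‖ < |k| ^ (-v)` for infinitely many integers `k`. For
the image `θ` of `z : ℝᵐ` in the torus, this is simultaneous approximation of `z` to order `v`. -/
def IsApproximable (θ : G) (v : ℝ) : Prop :=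
  ∃ᶠ k : ℤ in cofinite, ‖k • θ‖ < |(k : ℝ)| ^ (-v)

lemma IsApproximable.anti (h : IsApproximable θ w) (hvw : v ≤ w) : IsApproximable θ v := by
  refine (h.and_eventually (tendsto_abs_intCast_cofinite.eventually_ge_atTop 1)).mono ?_
  rintro k ⟨hk, hk1⟩
  exact hk.trans_le (Real.rpow_le_rpow_of_exponent_le hk1 (neg_le_neg hvw))

lemma eventually_mul_rpow_le_norm_zsmul (h : ¬IsApproximable θ w) (hwv : w < v) (C : ℝ) :
    ∀ᶠ k : ℤ in cofinite, C * |(k : ℝ)| ^ (-v) ≤ ‖k • θ‖ := by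
  filter_upwards [not_frequently.1 h, eventually_mul_rpow_le_rpow (neg_lt_neg hwv) C]
    with k hk hC
  exact hC.trans (not_lt.1 hk)

-- A fixed multiple of a nonzero integer avoids the finitely many exceptions.
lemma exists_mul_rpow_le_norm_zsmul (h : ¬IsApproximable θ w) :
    ∃ c : ℝ, 0 < c ∧ ∀ k : ℤ, k ≠ 0 → c * |(k : ℝ)| ^ (-w) ≤ ‖k • θ‖ := by
  have hfin : {k : ℤ | ‖k • θ‖ < |(k : ℝ)| ^ (-w)}.Finite :=
    not_infinite.1 (mt frequently_cofinite_iff_infinite.2 h)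
  obtain ⟨R, hR⟩ := hfin.isBounded.exists_norm_le
  obtain ⟨M, hM⟩ := exists_nat_gt (max R 0)
  have hM0 : (0 : ℝ) < M := (le_max_right _ _).trans_lt hM
  refine ⟨(M : ℝ) ^ (-w) / M, by positivity, fun k hk => ?_⟩
  have hk1 : (1 : ℝ) ≤ |(k : ℝ)| := mod_cast Int.one_le_abs hk
  have hnorm : ‖(M : ℤ) * k‖ = M * |(k : ℝ)| := by simp [Int.norm_eq_abs]
  have hMk : R < ‖(M : ℤ) * k‖ := by
    rw [hnorm]
    exact (le_max_left R 0).trans_lt (hM.trans_le (le_mul_of_one_le_right hM0.le hk1))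
  have hlow : (M * |(k : ℝ)|) ^ (-w) ≤ ‖((M : ℤ) * k) • θ‖ := by
    rw [← hnorm]
    exact not_lt.1 fun hlt => hMk.not_ge (hR _ hlt)
  have hupp : ‖((M : ℤ) * k) • θ‖ ≤ M * ‖k • θ‖ := by
    rw [mul_zsmul]
    exact (norm_zsmul_le _ _).trans_eq (by simp)
  rw [div_mul_eq_mul_div, div_le_iff₀' hM0, ← Real.mul_rpow hM0.le (abs_nonneg _)]
  exact hlow.trans hupp

lemma norm_zsmul_pos (h : ¬IsApproximable θ w) {k : ℤ} (hk : k ≠ 0) : 0 < ‖k • θ‖ := by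
  obtain ⟨c, hc, hlow⟩ := exists_mul_rpow_le_norm_zsmul h
  have : 0 < |(k : ℝ)| := abs_pos.2 (mod_cast hk)
  exact lt_of_lt_of_le (by positivity) (hlow k hk)

end Approximable

lemma isApproximable_of_lt_one (ξ : UnitAddCircle) {v : ℝ} (hv : v < 1) : IsApproximable ξ v := by
  by_contra hna
  have hw1 : max v 0 < 1 := max_lt hv one_pos
  obtain ⟨c, hc, hlow⟩ :=
    exists_mul_rpow_le_norm_zsmul (mt (fun h => h.anti (le_max_left v 0)) hna)
  obtain ⟨N, hN, hN0⟩ := (((tendsto_rpow_neg_atTop (sub_pos.2 hw1)).comp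
    tendsto_natCast_atTop_atTop).eventually_lt_const hc |>.and (eventually_gt_atTop 0)).exists
  obtain ⟨k, ⟨hk1, hkN⟩, hk⟩ := AddCircle.exists_norm_nsmul_le ξ hN0
  have hNR : (0 : ℝ) < N := mod_cast hN0
  have hkR : (0 : ℝ) < k := mod_cast hk1
  have hlt : 1 / (N : ℝ) < ‖k • ξ‖ :=
    calc 1 / (N : ℝ) = (N : ℝ) ^ (-(1 - max v 0)) * (N : ℝ) ^ (-max v 0) := by
          rw [← Real.rpow_add hNR, one_div, ← Real.rpow_neg_one]; congr 1; ring
      _ < c * (N : ℝ) ^ (-max v 0) := by gcongr; exact hN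
      _ ≤ c * (k : ℝ) ^ (-max v 0) := by
          refine mul_le_mul_of_nonneg_left ?_ hc.le
          exact Real.rpow_le_rpow_of_nonpos hkR (mod_cast hkN) (neg_nonpos.2 (le_max_right _ _))
      _ ≤ ‖k • ξ‖ := by simpa using hlow k (by lia)
  refine (hk.trans ?_).not_gt hlt
  gcongr
  simp

lemma abs_floor_le_two_mul_abs {x : ℝ} (hx : 1 ≤ |x|) : |(⌊x⌋ : ℝ)| ≤ 2 * |x| := by
  have hfract : |x - ⌊x⌋| ≤ 1 := by
    rw [Int.self_sub_floor, Int.abs_fract]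
    exact (Int.fract_lt_one x).le
  have := abs_sub_abs_le_abs_sub (⌊x⌋ : ℝ) x
  rw [abs_sub_comm] at this
  linarith

lemma floor_ne_zero_of_one_le_abs {x : ℝ} (hx : 1 ≤ |x|) : ⌊x⌋ ≠ 0 := by
  rw [Ne, Int.floor_eq_zero_iff]
  rintro ⟨h0, h1⟩
  rw [abs_of_nonneg h0] at hx
  exact h1.not_ge hx

-- The map `i ↦ (N i, ⌊x i / (γ ρ ^ N i)⌋)` is injective, which reduces the sum to a product of a
-- geometric series and a zeta series.
lemma summable_pow_mul_abs_rpow_of_separated {ι : Type*} (N : ι → ℕ) (x : ι → ℝ)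
    {γ ρ B t : ℝ} (hγ : 0 < γ) (hρ : 0 < ρ) (hB : 0 ≤ B) (hBρ : B * ρ ^ (-t) < 1) (ht : 1 < t)
    (hx : ∀ i, γ * ρ ^ N i ≤ |x i|)
    (hsep : ∀ i j, i ≠ j → N i = N j → γ * ρ ^ N i ≤ |x i - x j|) :
    Summable fun i => B ^ N i * |x i| ^ (-t) := by
  have hg : ∀ i, 0 < γ * ρ ^ N i := fun i => by positivity
  have hq : ∀ i, 1 ≤ |x i / (γ * ρ ^ N i)| := fun i => by
    rw [abs_div, abs_of_pos (hg i), one_le_div (hg i)]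
    exact hx i
  set F : ι → ℕ × ℤ := fun i => (N i, ⌊x i / (γ * ρ ^ N i)⌋)
  have hinj : Function.Injective F := by
    intro i j hij
    by_contra hne
    obtain ⟨hN, hfl⟩ := Prod.ext_iff.1 hij
    change N i = N j at hN
    simp only [F, ← hN] at hfl
    have hlt := Int.abs_sub_lt_one_of_floor_eq_floor hfl
    rw [← sub_div, abs_div, abs_of_pos (hg i), div_lt_one (hg i)] at hlt
    exact hlt.not_ge (hsep i j hne hN)
  have hsum : Summable fun p : ℕ × ℤ => (B * ρ ^ (-t)) ^ p.1 * |(p.2 : ℝ)| ^ (-t) :=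
    (summable_geometric_of_lt_one (by positivity) hBρ).mul_of_nonneg
      (Real.summable_abs_int_rpow ht) (fun n => by positivity) (fun n => by positivity)
  refine ((hsum.comp_injective hinj).mul_left ((γ / 2) ^ (-t))).of_nonneg_of_le
    (fun i => by positivity) fun i => ?_
  have hJ : 0 < |(⌊x i / (γ * ρ ^ N i)⌋ : ℝ)| :=
    abs_pos.2 (mod_cast floor_ne_zero_of_one_le_abs (hq i))
  have hlow : γ / 2 * ρ ^ N i * |(⌊x i / (γ * ρ ^ N i)⌋ : ℝ)| ≤ |x i| :=
    calc γ / 2 * ρ ^ N i * |(⌊x i / (γ * ρ ^ N i)⌋ : ℝ)|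
        ≤ γ / 2 * ρ ^ N i * (2 * |x i / (γ * ρ ^ N i)|) := by
          gcongr; exact abs_floor_le_two_mul_abs (hq i)
      _ = |x i| := by rw [abs_div, abs_of_pos (hg i)]; field_simp
  calc B ^ N i * |x i| ^ (-t)
      ≤ B ^ N i * (γ / 2 * ρ ^ N i * |(⌊x i / (γ * ρ ^ N i)⌋ : ℝ)|) ^ (-t) := by
        refine mul_le_mul_of_nonneg_left ?_ (by positivity)
        exact Real.rpow_le_rpow_of_nonpos (by positivity) hlow (by linarith)
    _ = (γ / 2) ^ (-t) * ((B * ρ ^ (-t)) ^ N i * |(⌊x i / (γ * ρ ^ N i)⌋ : ℝ)| ^ (-t)) := by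
        rw [Real.mul_rpow (by positivity) hJ.le, Real.mul_rpow (by positivity) (by positivity),
          mul_pow, Real.rpow_pow_comm hρ.le]
        ring

lemma rpow_inv_le_of_mul_rpow_neg_le {c w X δ : ℝ} (hc : 0 < c) (hw : 0 < w) (hX : 0 < X)
    (hδ : 0 < δ) (h : c * X ^ (-w) ≤ δ) : (c / δ) ^ w⁻¹ ≤ X := by
  rw [Real.rpow_inv_le_iff_of_pos (by positivity) hX.le hw, div_le_iff₀ hδ]
  rwa [Real.rpow_neg hX.le, ← div_eq_mul_inv, div_le_iff₀' (by positivity)] at h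

lemma exists_geometric_le_abs_of_norm_zsmul_le {G : Type*} [SeminormedAddCommGroup G] {θ : G}
    {w t : ℝ} (h : ¬IsApproximable θ w) (hwt : w < t) (ht : 0 < t) :
    ∃ γ ρ : ℝ, 0 < γ ∧ 0 < ρ ∧ 2 * ρ ^ (-t) < 1 ∧
      ∀ (k : ℤ) (n : ℕ), k ≠ 0 → ‖k • θ‖ ≤ 2 * (1 / 2) ^ n → γ * ρ ^ n ≤ |(k : ℝ)| := by
  wlog hw : 0 < w generalizing w
  · exact this (w := t / 2) (mt (fun h' => h'.anti (by linarith)) h) (by linarith) (by linarith)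
  obtain ⟨c, hc, hlow⟩ := exists_mul_rpow_le_norm_zsmul h
  refine ⟨(c / 2) ^ w⁻¹, 2 ^ w⁻¹, by positivity, by positivity, ?_, fun k n hk hkn => ?_⟩
  · have htw : 1 < w⁻¹ * t := by rwa [inv_mul_eq_div, one_lt_div hw]
    calc (2 : ℝ) * (2 ^ w⁻¹) ^ (-t) = 2 ^ (1 - w⁻¹ * t) := by
          rw [← Real.rpow_mul two_pos.le, sub_eq_add_neg, Real.rpow_add two_pos, Real.rpow_one,
            mul_neg]
      _ < 1 := Real.rpow_lt_one_of_one_lt_of_neg one_lt_two (by linarith)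
  · convert rpow_inv_le_of_mul_rpow_neg_le hc hw (abs_pos.2 (mod_cast hk)) (by positivity)
      ((hlow k hk).trans hkn) using 1
    rw [Real.rpow_pow_comm two_pos.le, ← Real.mul_rpow (by positivity) (by positivity),
      one_div_pow]
    congr 1
    field_simp

-- Group the integers `k` by the dyadic size of `‖k θ‖`: two of them in the class
-- `‖k θ‖ ≤ 2 ^ (-n)` have `‖(k - l) θ‖ ≤ 2 * 2 ^ (-n)`, hence are far apart.
lemma summable_abs_rpow_div_norm_zsmul {G : Type*} [SeminormedAddCommGroup G] {θ : G} {w t : ℝ}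
    (hθ : ∀ k : ℤ, ‖k • θ‖ ≤ 1) (h : ¬IsApproximable θ w) (hwt : w < t) (ht : 1 < t) :
    Summable fun k : ℤ => |(k : ℝ)| ^ (-t) / ‖k • θ‖ := by
  obtain ⟨γ, ρ, hγ, hρ, hρt, hlarge⟩ :=
    exists_geometric_le_abs_of_norm_zsmul_le h hwt (one_pos.trans ht)
  have hscale : ∀ k : {k : ℤ // k ≠ 0}, ∃ n : ℕ,
      (1 / 2 : ℝ) ^ (n + 1) < ‖(k : ℤ) • θ‖ ∧ ‖(k : ℤ) • θ‖ ≤ (1 / 2) ^ n := fun k =>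
    exists_nat_pow_near_of_lt_one (norm_zsmul_pos h k.2) (hθ k) one_half_pos one_half_lt_one
  choose N hN_lt hN_le using hscale
  have hsum : Summable fun k : {k : ℤ // k ≠ 0} => (2 : ℝ) ^ N k * |(k : ℝ)| ^ (-t) := by
    refine summable_pow_mul_abs_rpow_of_separated N _ hγ hρ two_pos.le hρt ht
      (fun k => hlarge k _ k.2 ?_) fun k l hkl hNkl => ?_
    · exact (hN_le k).trans (le_mul_of_one_le_left (by positivity) one_le_two)
    · rw [← Int.cast_sub]
      refine hlarge _ _ (sub_ne_zero.2 (Subtype.coe_injective.ne hkl)) ?_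
      calc ‖((k : ℤ) - l) • θ‖ ≤ ‖(k : ℤ) • θ‖ + ‖(l : ℤ) • θ‖ := by
            rw [sub_smul]; exact norm_sub_le _ _
        _ ≤ (1 / 2) ^ N k + (1 / 2) ^ N k := add_le_add (hN_le k) (hNkl ▸ hN_le l)
        _ = 2 * (1 / 2) ^ N k := (two_mul _).symm
  have hsub : Summable fun k : {k : ℤ // k ≠ 0} => |(k : ℝ)| ^ (-t) / ‖(k : ℤ) • θ‖ := by
    refine (hsum.mul_left 2).of_nonneg_of_le (fun k => by positivity) fun k => ?_
    have hone : 1 ≤ 2 * 2 ^ N k * ‖(k : ℤ) • θ‖ :=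
      calc (1 : ℝ) = 2 * 2 ^ N k * (1 / 2) ^ (N k + 1) := by
            rw [← pow_succ', ← mul_pow]; norm_num
        _ ≤ 2 * 2 ^ N k * ‖(k : ℤ) • θ‖ := by gcongr; exact (hN_lt k).le
    rw [div_le_iff₀ (norm_zsmul_pos h k.2)]
    calc |(k : ℝ)| ^ (-t) ≤ 2 * 2 ^ N k * ‖(k : ℤ) • θ‖ * |(k : ℝ)| ^ (-t) :=
          le_mul_of_one_le_left (by positivity) hone
      _ = 2 * (2 ^ N k * |(k : ℝ)| ^ (-t)) * ‖(k : ℤ) • θ‖ := by ring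
  exact (Set.finite_singleton (0 : ℤ)).summable_compl_iff.1 hsub

lemma sSup_coe_eq_iSup (P : ℝ → Prop) :
    sSup {w : EReal | ∃ v : ℝ, w = v ∧ P v} = ⨆ (v : ℝ) (_ : P v), (v : EReal) := by
  refine (congrArg sSup ?_).trans (sSup_image (s := {v | P v}))
  ext w
  simp only [mem_ofPred_eq, mem_image, and_comm, eq_comm]

section Torus

variable {ι : Type*} {m n : ℕ} {x : ℝ} {u v w : ℝ}

/-- The projection `ℝ^ι → (ℝ / ℤ)^ι`; the norm on the target is the largest distance of a
coordinate to the nearest integer. -/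
noncomputable def toTorus : (ι → ℝ) →+ (ι → UnitAddCircle) :=
  (QuotientAddGroup.mk' (AddSubgroup.zmultiples (1 : ℝ))).compLeft ι

@[simp]
lemma toTorus_apply (z : ι → ℝ) (i : ι) : toTorus z i = z i := rfl

lemma toTorus_snoc (z : Fin m → ℝ) :
    toTorus (Fin.snoc z x : Fin (m + 1) → ℝ) = Fin.snoc (toTorus z) (x : UnitAddCircle) := by
  ext i
  refine Fin.lastCases ?_ (fun j => ?_) i <;> simp

lemma norm_coe_unitAddCircle_le (x : ℝ) : ‖(x : UnitAddCircle)‖ ≤ |x| :=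
  QuotientAddGroup.norm_mk_le_norm

lemma norm_coe_unitAddCircle_lt_iff : ‖(x : UnitAddCircle)‖ < u ↔ ∃ p : ℤ, |x + p| < u := by
  rw [UnitAddCircle.norm_eq]
  refine ⟨fun h => ⟨-round x, by simpa [← sub_eq_add_neg] using h⟩, fun ⟨p, hp⟩ => ?_⟩
  exact (round_le x (-p)).trans_lt (by simpa using hp)

lemma norm_unitAddCircle_le_one (ξ : UnitAddCircle) : ‖ξ‖ ≤ 1 :=
  (AddCircle.norm_le_half_period 1 one_ne_zero).trans (by norm_num)

lemma norm_toTorus_le [Fintype ι] (z : ι → ℝ) : ‖toTorus z‖ ≤ ‖z‖ :=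
  (pi_norm_le_iff_of_nonneg (norm_nonneg z)).2 fun i =>
    (norm_coe_unitAddCircle_le (z i)).trans (norm_le_pi_norm z i)

lemma norm_torus_le_one [Fintype ι] (θ : ι → UnitAddCircle) : ‖θ‖ ≤ 1 :=
  (pi_norm_le_iff_of_nonneg zero_le_one).2 fun i => norm_unitAddCircle_le_one (θ i)

lemma norm_zsmul_toTorus_lt_iff [Fintype ι] (hu : 0 < u) (k : ℤ) (z : ι → ℝ) :
    ‖k • toTorus z‖ < u ↔ ∃ p : ι → ℤ, ∀ i, |(k : ℝ) * z i + p i| < u := by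
  rw [← map_zsmul, pi_norm_lt_iff hu]
  simp only [toTorus_apply, norm_coe_unitAddCircle_lt_iff, zsmul_eq_mul,
    Pi.mul_apply, Pi.intCast_apply, Classical.skolem]

lemma isApproximable_toTorus_iff [Fintype ι] (z : ι → ℝ) :
    IsApproximable (toTorus z) v ↔
      {k : ℤ | ∃ p : ι → ℤ, ∀ i, |(k : ℝ) * z i + p i| < |(k : ℝ)| ^ (-v)}.Infinite := by
  rw [← frequently_cofinite_iff_infinite, IsApproximable]
  refine frequently_congr ?_
  filter_upwards [tendsto_abs_intCast_cofinite.eventually_gt_atTop 0] with k hk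
  exact norm_zsmul_toTorus_lt_iff (Real.rpow_pos_of_pos hk _) k z

lemma sigmaV_eq_iSup (z : Fin m → ℝ) :
    sigmaV z = ⨆ (v : ℝ) (_ : IsApproximable (toTorus z) v), (v : EReal) := by
  simp only [isApproximable_toTorus_iff]
  exact sSup_coe_eq_iSup _

lemma sigmaV_congr {z : Fin m → ℝ} {z' : Fin n → ℝ}
    (h : ∀ k : ℤ, ‖k • toTorus z‖ = ‖k • toTorus z'‖) : sigmaV z = sigmaV z' := by
  simp only [sigmaV_eq_iSup, IsApproximable, h]

lemma not_isApproximable_of_sigmaV_lt {z : Fin m → ℝ} (h : sigmaV z < w) :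
    ¬IsApproximable (toTorus z) w := fun hw =>
  h.not_ge (sigmaV_eq_iSup z ▸ le_iSup₂_of_le w hw le_rfl)

end Torus

section ProdTimes

variable {n : ℕ} {u v : ℝ}

lemma prodTimes_eq_prod_max (q : Fin n → ℤ) : prodTimes q = ∏ i, max 1 |(q i : ℝ)| := by
  refine Finset.prod_congr rfl fun i _ => ?_
  split_ifs with h
  · simp [h]
  · exact (max_eq_right (mod_cast Int.one_le_abs h)).symm

lemma one_le_prodTimes (q : Fin n → ℤ) : 1 ≤ prodTimes q := by
  rw [prodTimes_eq_prod_max]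
  exact Finset.one_le_prod fun i _ => le_max_left _ _

lemma prodTimes_rpow_neg_anti (q : Fin n → ℤ) (huv : u ≤ v) :
    prodTimes q ^ (-v) ≤ prodTimes q ^ (-u) :=
  Real.rpow_le_rpow_of_exponent_le (one_le_prodTimes q) (neg_le_neg huv)

lemma prodTimes_single (i : Fin n) {k : ℤ} (hk : k ≠ 0) :
    prodTimes (Pi.single i k) = |(k : ℝ)| := by
  rw [prodTimes, Finset.prod_eq_single i (fun j _ hj => by simp [hj]) (by simp)]
  simp [hk]

lemma prodTimes_eq_prod_mul_abs_last {q : Fin (n + 1) → ℤ} (hq : q (Fin.last n) ≠ 0) :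
    prodTimes q = (∏ i : Fin n, max 1 |(q i.castSucc : ℝ)|) * |(q (Fin.last n) : ℝ)| := by
  rw [prodTimes_eq_prod_max, Fin.prod_univ_castSucc, max_eq_right (a := (1 : ℝ))]
  exact mod_cast Int.one_le_abs hq

lemma summable_pi_prod {ι : Type*} {f : ι → ℝ} (hf : Summable f) (hf0 : 0 ≤ f) (n : ℕ) :
    Summable fun q : Fin n → ι => ∏ i, f (q i) := by
  induction n with
  | zero => exact Summable.of_finite
  | succ n ih =>
    rw [← (Fin.consEquiv fun _ => ι).summable_iff]
    refine (hf.mul_of_nonneg ih hf0 fun q => Finset.prod_nonneg fun i _ => hf0 _).congr fun x => ?_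
    simp [Fin.prod_univ_succ, Fin.consEquiv]

lemma summable_prodTimes_rpow (n : ℕ) (hu : 1 < u) :
    Summable fun q : Fin n → ℤ => prodTimes q ^ (-u) := by
  have hmax : Summable fun k : ℤ => max 1 |(k : ℝ)| ^ (-u) := by
    refine (summable_congr_cofinite ?_).1 (Real.summable_abs_int_rpow hu)
    filter_upwards [tendsto_abs_intCast_cofinite.eventually_ge_atTop 1] with k hk
    rw [max_eq_right hk]
  refine (summable_pi_prod hmax (fun k => by positivity) n).congr fun q => ?_
  rw [prodTimes_eq_prod_max, ← Real.finsetProd_rpow _ _ fun i _ => by positivity]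

end ProdTimes

section MulApproximable

variable {G : Type*} [SeminormedAddCommGroup G] {n : ℕ} {u v : ℝ}

/-- `ξ` is multiplicatively approximable to order `u` if `‖∑ qᵢ ξᵢ‖ < Π×(q) ^ (-u)` for infinitely
many integer vectors `q`. For the image of `y : ℝⁿ` in the torus, `ω×(y)` is the supremum of
`n * u` over such `u`. -/
def IsMulApproximable (ξ : Fin n → G) (u : ℝ) : Prop :=
  ∃ᶠ q : Fin n → ℤ in cofinite, ‖∑ i, q i • ξ i‖ < prodTimes q ^ (-u)

lemma IsMulApproximable.anti {ξ : Fin n → G} (h : IsMulApproximable ξ v) (huv : u ≤ v) :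
    IsMulApproximable ξ u :=
  h.mono fun q hq => hq.trans_le (prodTimes_rpow_neg_anti q huv)

lemma IsApproximable.isMulApproximable {ξ : Fin n → G} {i : Fin n} (h : IsApproximable (ξ i) u) :
    IsMulApproximable ξ u := by
  refine (Pi.single_injective (M := fun _ : Fin n => ℤ) i).tendsto_cofinite.frequently
    ((h.and_eventually (eventually_cofinite_ne 0)).mono ?_)
  rintro k ⟨hk, hk0⟩
  rw [prodTimes_single i hk0, Finset.sum_eq_single i (fun j _ hj => by simp [hj]) (by simp)]
  simpa using hk

lemma omegaT_eq_iSup (y : Fin n → ℝ) :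
    omegaT y = ⨆ (v : ℝ) (_ : IsMulApproximable (toTorus y) (v / n)), (v : EReal) := by
  have hiff : ∀ v : ℝ, IsMulApproximable (toTorus y) (v / n) ↔ {q : Fin n → ℤ | ∃ p : ℤ,
      |(∑ i, (q i : ℝ) * y i) + p| < prodTimes q ^ (-(v / n))}.Infinite := fun v => by
    simp only [← frequently_cofinite_iff_infinite, IsMulApproximable,
      ← norm_coe_unitAddCircle_lt_iff]
    simp [← zsmul_eq_mul]
  simp only [hiff]
  exact sSup_coe_eq_iSup _

lemma coe_le_omegaT {y : Fin n → ℝ} (h : IsMulApproximable (toTorus y) (v / n)) :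
    (v : EReal) ≤ omegaT y :=
  omegaT_eq_iSup y ▸ le_iSup₂_of_le v h le_rfl

lemma omegaT_le_coe {y : Fin n → ℝ} (h : ¬IsMulApproximable (toTorus y) (v / n)) :
    omegaT y ≤ v := by
  refine omegaT_eq_iSup y ▸ iSup₂_le fun w hw => EReal.coe_le_coe_iff.2 ?_
  by_contra! hvw
  exact h (hw.anti (by gcongr))

lemma natCast_le_omegaT [NeZero n] (y : Fin n → ℝ) : (n : EReal) ≤ omegaT y := by
  rw [← EReal.ge_of_forall_gt_iff_ge]
  intro v hv
  have hvn : v < n := by exact_mod_cast hv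
  have hn : (0 : ℝ) < n := mod_cast NeZero.pos n
  exact coe_le_omegaT (IsApproximable.isMulApproximable (i := 0)
    (isApproximable_of_lt_one _ ((div_lt_one hn).2 hvn)))

lemma omegaTMeas_eq_of_ae_eq {μ : Measure (Fin n → ℝ)} {B : EReal} (hμ : μ ≠ 0)
    (h : ∀ᵐ y ∂μ, omegaT y = B) : omegaTMeas μ = B := by
  have hpos : ∀ v : ℝ, 0 < μ {y | v < omegaT y} ↔ v < B := fun v => by
    have hset : {y | v < omegaT y} =ᵐ[μ] {_y | v < B} :=
      eventuallyEq_set.2 (h.mono fun y hy => by simp only [mem_ofPred_eq, hy])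
    rw [measure_congr hset]
    by_cases hv : v < B <;> simp [hv, hμ]
  rw [omegaTMeas, sSup_coe_eq_iSup]
  simp only [hpos]
  refine le_antisymm (iSup₂_le fun v hv => hv.le) ?_
  rw [← EReal.ge_of_forall_gt_iff_ge]
  exact fun v hv => le_iSup₂_of_le v hv le_rfl

end MulApproximable

lemma norm_snoc {G : Type*} [SeminormedAddCommGroup G] {m : ℕ} (θ : Fin m → G) (ξ : G) :
    ‖(Fin.snoc θ ξ : Fin (m + 1) → G)‖ = max ‖θ‖ ‖ξ‖ := by
  set η : Fin (m + 1) → G := Fin.snoc θ ξ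
  refine le_antisymm ((pi_norm_le_iff_of_nonneg (by positivity)).2 fun i => ?_) (max_le
    ((pi_norm_le_iff_of_nonneg (norm_nonneg η)).2 fun i => ?_) ?_)
  · refine Fin.lastCases ?_ (fun j => ?_) i
    · simp [η]
    · simpa [η] using Or.inl (norm_le_pi_norm θ j)
  · simpa [η] using norm_le_pi_norm η i.castSucc
  · simpa [η] using norm_le_pi_norm η (Fin.last m)

lemma norm_zsmul_toTorus_snoc {m : ℕ} (z : Fin m → ℝ) (x : ℝ) (k : ℤ) :
    ‖k • toTorus (Fin.snoc z x : Fin (m + 1) → ℝ)‖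
      = max ‖k • toTorus z‖ ‖k • (x : UnitAddCircle)‖ := by
  rw [toTorus_snoc, ← norm_snoc]
  congr 1 with i
  refine Fin.lastCases ?_ (fun j => ?_) i <;> simp

lemma abs_sum_mul_le {ι : Type*} [Fintype ι] (c x : ι → ℝ) :
    |∑ i, c i * x i| ≤ Fintype.card ι * (‖c‖ * ‖x‖) :=
  calc |∑ i, c i * x i| ≤ ∑ i, |c i * x i| := Finset.abs_sum_le_sum_abs _ _
    _ ≤ ∑ _i : ι, ‖c‖ * ‖x‖ := Finset.sum_le_sum fun i _ => by
        rw [abs_mul]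
        exact mul_le_mul (norm_le_pi_norm c i) (norm_le_pi_norm x i) (abs_nonneg _) (norm_nonneg c)
    _ = Fintype.card ι * (‖c‖ * ‖x‖) := by simp

section Hyperplane

variable {m : ℕ} (α : Fin m → ℝ) (b : ℝ)

/-- The parameterization `x ↦ (x, α · x + b)` of a hyperplane. -/
noncomputable def hyperplaneParam (x : Fin m → ℝ) : Fin (m + 1) → ℝ :=
  Fin.snoc x (∑ i, α i * x i + b)

/-- The coefficient vector of the linear part of the affine form `x ↦ q · (x, α · x + b)`. -/
noncomputable def linearPart (q : Fin (m + 1) → ℤ) : Fin m → ℝ :=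
  fun i => q i.castSucc + q (Fin.last m) * α i

/-- The integer vector with last entry `k` whose `linearPart` is smallest. -/
noncomputable def nearestForm (k : ℤ) : Fin (m + 1) → ℤ :=
  Fin.snoc (fun i => -round (k * α i)) k

lemma sum_zsmul_toTorus_hyperplaneParam (q : Fin (m + 1) → ℤ) (x : Fin m → ℝ) :
    ∑ i, q i • toTorus (hyperplaneParam α b x) i
      = ((∑ i, linearPart α q i * x i : ℝ) : UnitAddCircle)
        + q (Fin.last m) • (b : UnitAddCircle) := by
  have hdot : ∑ i, (q i : ℝ) * hyperplaneParam α b x i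
      = ∑ i, linearPart α q i * x i + q (Fin.last m) * b := by
    simp only [hyperplaneParam, linearPart, Fin.sum_univ_castSucc, Fin.snoc_castSucc,
      Fin.snoc_last, mul_add, add_mul, Finset.sum_add_distrib, Finset.mul_sum, add_assoc, mul_assoc]
  have hcoe := congrArg (QuotientAddGroup.mk' (AddSubgroup.zmultiples (1 : ℝ))) hdot
  simpa [← zsmul_eq_mul] using hcoe

lemma toTorus_linearPart (q : Fin (m + 1) → ℤ) :
    toTorus (linearPart α q) = q (Fin.last m) • toTorus α := by
  ext i
  simp [linearPart, ← zsmul_eq_mul]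

lemma linearPart_injOn_last {q q' : Fin (m + 1) → ℤ} (hq : ‖linearPart α q‖ < 1 / 2)
    (hq' : ‖linearPart α q'‖ < 1 / 2) (hlast : q (Fin.last m) = q' (Fin.last m)) : q = q' := by
  ext i
  refine Fin.lastCases hlast (fun j => ?_) i
  have hj := (norm_le_pi_norm (linearPart α q - linearPart α q') j).trans (norm_sub_le _ _)
  simp only [linearPart, hlast, Pi.sub_apply, add_sub_add_right_eq_sub, Real.norm_eq_abs] at hj
  have hlt : |(q j.castSucc - q' j.castSucc : ℝ)| < 1 := by linarith
  exact sub_eq_zero.1 (Int.abs_lt_one_iff.1 (mod_cast hlt))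

@[simp]
lemma nearestForm_last (k : ℤ) : nearestForm α k (Fin.last m) = k :=
  Fin.snoc_last _ _

lemma nearestForm_injective : Function.Injective (nearestForm α) := fun k l hkl => by
  simpa using congrFun hkl (Fin.last m)

lemma norm_linearPart_nearestForm (k : ℤ) :
    ‖linearPart α (nearestForm α k)‖ = ‖k • toTorus α‖ := by
  have hcoord : ∀ i, ‖linearPart α (nearestForm α k) i‖₊ = ‖(k • toTorus α) i‖₊ := fun i => by
    rw [← NNReal.coe_inj, coe_nnnorm, coe_nnnorm, ← map_zsmul, toTorus_apply, UnitAddCircle.norm_eq]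
    simp [linearPart, nearestForm, neg_add_eq_sub]
  simp only [Pi.norm_def, hcoord]

lemma prod_mul_ite_eq_mul_pow_hammingNorm (f : Fin m → ℝ) (X : ℝ) :
    ∏ i, f i * (if α i ≠ 0 then X else 1) = (∏ i, f i) * X ^ hammingNorm α := by
  rw [Finset.prod_mul_distrib, Finset.prod_ite, Finset.prod_const, Finset.prod_const_one, mul_one,
    hammingNorm]

lemma exists_prodTimes_le : ∃ C : ℝ, 0 < C ∧ ∀ q : Fin (m + 1) → ℤ, ‖linearPart α q‖ ≤ 1 →
    q (Fin.last m) ≠ 0 → prodTimes q ≤ C * |(q (Fin.last m) : ℝ)| ^ (hammingNorm α + 1) := by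
  refine ⟨∏ i, (|α i| + 1), Finset.prod_pos fun i _ => by positivity, fun q hq hlast => ?_⟩
  have hQ : (1 : ℝ) ≤ |(q (Fin.last m) : ℝ)| := mod_cast Int.one_le_abs hlast
  rw [prodTimes_eq_prod_mul_abs_last hlast, pow_succ, ← mul_assoc,
    ← prod_mul_ite_eq_mul_pow_hammingNorm]
  gcongr with i
  have hi : |(q i.castSucc : ℝ) + q (Fin.last m) * α i| ≤ 1 := (norm_le_pi_norm _ i).trans hq
  have htri := abs_sub_abs_le_abs_add (q i.castSucc : ℝ) (q (Fin.last m) * α i)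
  rw [abs_mul] at htri
  by_cases h0 : α i = 0
  · simpa [h0] using hi
  · have := abs_nonneg (α i)
    rw [if_pos h0]
    exact max_le (by nlinarith) (by nlinarith)

lemma exists_le_prodTimes : ∃ C : ℝ, 0 < C ∧ ∀ q : Fin (m + 1) → ℤ, ‖linearPart α q‖ ≤ 1 →
    q (Fin.last m) ≠ 0 → C * |(q (Fin.last m) : ℝ)| ^ (hammingNorm α + 1) ≤ prodTimes q := by
  refine ⟨∏ i, (if α i = 0 then 1 else |α i| / 2), Finset.prod_pos fun i _ => ?_,
    fun q hq hlast => ?_⟩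
  · split_ifs with h0
    · exact one_pos
    · exact half_pos (abs_pos.2 h0)
  rw [prodTimes_eq_prod_mul_abs_last hlast, pow_succ, ← mul_assoc,
    ← prod_mul_ite_eq_mul_pow_hammingNorm]
  gcongr with i
  have hi : |(q i.castSucc : ℝ) + q (Fin.last m) * α i| ≤ 1 := (norm_le_pi_norm _ i).trans hq
  have htri := abs_sub_abs_le_abs_add (q (Fin.last m) * α i) (q i.castSucc : ℝ)
  rw [abs_mul, add_comm (_ * _)] at htri
  by_cases h0 : α i = 0
  · simp [h0]
  · rw [if_neg h0, if_pos h0]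
    linarith [le_max_left 1 |(q i.castSucc : ℝ)|, le_max_right 1 |(q i.castSucc : ℝ)|]

lemma mul_pow_rpow_neg {A X : ℝ} (hA : 0 ≤ A) (hX : 0 ≤ X) (n : ℕ) (u : ℝ) :
    (A * X ^ n) ^ (-u) = A ^ (-u) * X ^ (-(n * u)) := by
  rw [Real.mul_rpow hA (by positivity), ← Real.rpow_natCast, ← Real.rpow_mul hX, mul_neg]

lemma exists_mul_rpow_le_prodTimes_rpow {u : ℝ} (hu : 0 ≤ u) :
    ∃ C : ℝ, 0 < C ∧ ∀ q : Fin (m + 1) → ℤ, ‖linearPart α q‖ ≤ 1 → q (Fin.last m) ≠ 0 →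
      C * |(q (Fin.last m) : ℝ)| ^ (-(((hammingNorm α + 1 : ℕ) : ℝ) * u)) ≤ prodTimes q ^ (-u) := by
  obtain ⟨C, hC, hle⟩ := exists_prodTimes_le α
  refine ⟨C ^ (-u), by positivity, fun q hq hlast => ?_⟩
  rw [← mul_pow_rpow_neg hC.le (abs_nonneg _)]
  exact Real.rpow_le_rpow_of_nonpos (one_pos.trans_le (one_le_prodTimes q)) (hle q hq hlast)
    (neg_nonpos.2 hu)

lemma exists_prodTimes_rpow_le_mul_rpow {u : ℝ} (hu : 0 ≤ u) :
    ∃ C : ℝ, 0 < C ∧ ∀ q : Fin (m + 1) → ℤ, ‖linearPart α q‖ ≤ 1 → q (Fin.last m) ≠ 0 →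
      prodTimes q ^ (-u) ≤ C * |(q (Fin.last m) : ℝ)| ^ (-(((hammingNorm α + 1 : ℕ) : ℝ) * u)) := by
  obtain ⟨C, hC, hle⟩ := exists_le_prodTimes α
  refine ⟨C ^ (-u), by positivity, fun q hq hlast => ?_⟩
  have : 0 < |(q (Fin.last m) : ℝ)| := abs_pos.2 (mod_cast hlast)
  rw [← mul_pow_rpow_neg hC.le (abs_nonneg _)]
  exact Real.rpow_le_rpow_of_nonpos (by positivity) (hle q hq hlast) (neg_nonpos.2 hu)

variable {α b}

lemma IsApproximable.isMulApproximable_hyperplaneParam {v u : ℝ}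
    (h : IsApproximable (toTorus (Fin.snoc α b : Fin (m + 1) → ℝ)) v) (hu : 0 ≤ u)
    (huv : ((hammingNorm α + 1 : ℕ) : ℝ) * u < v) (x : Fin m → ℝ) :
    IsMulApproximable (toTorus (hyperplaneParam α b x)) u := by
  obtain ⟨C, hC, hprod⟩ := exists_mul_rpow_le_prodTimes_rpow α hu
  refine (nearestForm_injective α).tendsto_cofinite.frequently ((h.and_eventually
    ((eventually_cofinite_ne 0).and
      (eventually_mul_rpow_le_rpow (neg_lt_neg huv) ((m * ‖x‖ + 1) / C)))).mono ?_)
  rintro k ⟨hk, hk0, hlarge⟩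
  rw [norm_zsmul_toTorus_snoc] at hk
  rw [div_mul_eq_mul_div, div_le_iff₀' hC] at hlarge
  have hnear : ‖linearPart α (nearestForm α k)‖ ≤ 1 :=
    (norm_linearPart_nearestForm α k).trans_le (norm_torus_le_one _)
  rw [sum_zsmul_toTorus_hyperplaneParam, nearestForm_last]
  calc ‖((∑ i, linearPart α (nearestForm α k) i * x i : ℝ) : UnitAddCircle)
        + k • (b : UnitAddCircle)‖
      ≤ m * (‖k • toTorus α‖ * ‖x‖) + ‖k • (b : UnitAddCircle)‖ := by
        refine (norm_add_le _ _).trans (add_le_add_left ?_ _)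
        refine (norm_coe_unitAddCircle_le _).trans ((abs_sum_mul_le _ x).trans_eq ?_)
        rw [norm_linearPart_nearestForm, Fintype.card_fin]
    _ ≤ (m * ‖x‖ + 1) * max ‖k • toTorus α‖ ‖k • (b : UnitAddCircle)‖ := by
        rw [add_mul, one_mul, mul_comm ‖k • toTorus α‖, ← mul_assoc]
        gcongr
        · exact le_max_left _ _
        · exact le_max_right _ _
    _ < (m * ‖x‖ + 1) * |(k : ℝ)| ^ (-v) := by gcongr
    _ ≤ C * |(k : ℝ)| ^ (-(((hammingNorm α + 1 : ℕ) : ℝ) * u)) := hlarge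
    _ ≤ prodTimes (nearestForm α k) ^ (-u) := by
        simpa using hprod (nearestForm α k) hnear (by simpa using hk0)

end Hyperplane

section Volume

variable {ι : Type*} [Fintype ι]

lemma det_updateRow_one [DecidableEq ι] (c : ι → ℝ) (j : ι) :
    ((1 : Matrix ι ι ℝ).updateRow j c).det = c j := by
  rw [← Matrix.cramer_transpose_apply, Matrix.transpose_one, Matrix.cramer_one]
  rfl

-- The linear map replacing the `j`-th coordinate by `c · x` sends the slab into a box.
lemma volume_slab_le (c : ι → ℝ) {j : ι} (hj : c j ≠ 0) (e N ε : ℝ) :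
    volume {x ∈ closedBall (0 : ι → ℝ) N | |∑ i, c i * x i + e| < ε}
      ≤ ENNReal.ofReal |c j|⁻¹ *
        (ENNReal.ofReal (2 * ε) * ENNReal.ofReal (2 * N) ^ (Fintype.card ι - 1)) := by
  classical
  set A : Matrix ι ι ℝ := (1 : Matrix ι ι ℝ).updateRow j c
  have hdet : LinearMap.det (Matrix.toLin' A) = c j := by
    rw [LinearMap.det_toLin', det_updateRow_one]
  set S : ι → Set ℝ := Function.update (fun _ => Icc (-N) N) j (ball (-e) ε)
  have hsub : {x ∈ closedBall (0 : ι → ℝ) N | |∑ i, c i * x i + e| < ε}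
      ⊆ Matrix.toLin' A ⁻¹' univ.pi S := by
    rintro x ⟨hxN, hxe⟩ i -
    by_cases hij : i = j
    · subst hij
      simpa [S, A, Matrix.mulVec, dotProduct, Real.dist_eq] using hxe
    · have hxi := (norm_le_pi_norm x i).trans (mem_closedBall_zero_iff.1 hxN)
      simpa [S, A, hij, Matrix.mulVec, dotProduct, Matrix.one_apply] using abs_le.1 hxi
  calc volume {x ∈ closedBall (0 : ι → ℝ) N | |∑ i, c i * x i + e| < ε}
      ≤ volume (Matrix.toLin' A ⁻¹' univ.pi S) := measure_mono hsub
    _ = ENNReal.ofReal |c j|⁻¹ * ∏ i, volume (S i) := by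
        rw [Measure.addHaar_preimage_linearMap _ (by rwa [hdet]), hdet, volume_pi_pi, abs_inv]
    _ = _ := by
        rw [← Finset.mul_prod_erase _ _ (Finset.mem_univ j),
          Finset.prod_congr rfl (g := fun _ => ENNReal.ofReal (2 * N)) fun i hi => ?_]
        · simp [S, Finset.card_erase_of_mem]
        · simp [S, Finset.ne_of_mem_erase hi, two_mul]

lemma card_Icc_ceil_floor_le (y : ℝ) {R : ℝ} (hR : 0 ≤ R) :
    ((Finset.Icc ⌈y - R⌉ ⌊y + R⌋).card : ℝ) ≤ 2 * R + 1 := by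
  rw [Int.card_Icc, ← Int.cast_natCast, Int.toNat_eq_max, Int.cast_max, Int.cast_zero]
  push_cast
  refine max_le ?_ (by positivity)
  linarith [Int.le_ceil (y - R), Int.floor_le (y + R)]

lemma volume_norm_lt_le_card_mul {N : ℝ} (hN : 0 ≤ N) {c : ι → ℝ} {j : ι} (hj : c j ≠ 0)
    (d : ℝ) {ε : ℝ} (hε : ε ≤ 1) :
    volume {x ∈ closedBall (0 : ι → ℝ) N | ‖((∑ i, c i * x i + d : ℝ) : UnitAddCircle)‖ < ε}
      ≤ ENNReal.ofReal (2 * (1 + Fintype.card ι * (‖c‖ * N)) + 1) * (ENNReal.ofReal |c j|⁻¹ *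
        (ENNReal.ofReal (2 * ε) * ENNReal.ofReal (2 * N) ^ (Fintype.card ι - 1))) := by
  set R : ℝ := 1 + Fintype.card ι * (‖c‖ * N)
  set T : Finset ℤ := Finset.Icc ⌈-d - R⌉ ⌊-d + R⌋
  have hsub : {x ∈ closedBall (0 : ι → ℝ) N | ‖((∑ i, c i * x i + d : ℝ) : UnitAddCircle)‖ < ε}
      ⊆ ⋃ p ∈ T, {x ∈ closedBall (0 : ι → ℝ) N | |∑ i, c i * x i + (d + p)| < ε} := by
    rintro x ⟨hxN, hx⟩
    obtain ⟨p, hp⟩ := norm_coe_unitAddCircle_lt_iff.1 hx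
    have hsum : |∑ i, c i * x i| ≤ Fintype.card ι * (‖c‖ * N) :=
      (abs_sum_mul_le c x).trans (by gcongr; exact mem_closedBall_zero_iff.1 hxN)
    refine mem_biUnion (x := p) (Finset.mem_Icc.2 ?_) ⟨hxN, by rwa [← add_assoc]⟩
    rw [Int.ceil_le, Int.le_floor]
    constructor <;> linarith [abs_le.1 hsum, abs_lt.1 hp]
  calc _ ≤ _ := (measure_mono hsub).trans (measure_biUnion_finset_le _ _)
    _ ≤ T.card • (ENNReal.ofReal |c j|⁻¹ *
        (ENNReal.ofReal (2 * ε) * ENNReal.ofReal (2 * N) ^ (Fintype.card ι - 1))) :=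
        Finset.sum_le_card_nsmul _ _ _ fun p _ => volume_slab_le c hj (d + p) N ε
    _ ≤ _ := by
        rw [nsmul_eq_mul, ← ENNReal.ofReal_natCast]
        gcongr
        exact card_Icc_ceil_floor_le _ (by positivity)

lemma exists_volume_norm_add_lt_le (ι : Type*) [Fintype ι] {N : ℝ} (hN : 0 ≤ N) :
    ∃ K : ℝ, 0 ≤ K ∧ ∀ (c : ι → ℝ) (δ : UnitAddCircle) (ε : ℝ), c ≠ 0 → 0 ≤ ε → ε ≤ 1 →
      volume {x ∈ closedBall (0 : ι → ℝ) N |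
          ‖((∑ i, c i * x i : ℝ) : UnitAddCircle) + δ‖ < ε}
        ≤ ENNReal.ofReal (K * (ε * (1 + 1 / ‖c‖))) := by
  set M : ℝ := Fintype.card ι * N
  refine ⟨2 * (2 * N) ^ (Fintype.card ι - 1) * (3 + 2 * M), by positivity,
    fun c δ ε hc hε0 hε1 => ?_⟩
  obtain ⟨i₀, -⟩ := Function.ne_iff.1 hc
  have : Nonempty ι := ⟨i₀⟩
  obtain ⟨j, hmax⟩ := Finite.exists_max fun i => ‖c i‖
  have hj : ‖c j‖ = ‖c‖ := (norm_le_pi_norm c j).antisymm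
    ((pi_norm_le_iff_of_nonneg (norm_nonneg _)).2 hmax)
  obtain ⟨d, rfl⟩ := QuotientAddGroup.mk_surjective δ
  have hcpos : 0 < ‖c‖ := norm_pos_iff.2 hc
  have hcj : c j ≠ 0 := norm_pos_iff.1 (hj ▸ hcpos)
  refine (volume_norm_lt_le_card_mul hN hcj d hε1).trans ?_
  rw [← ENNReal.ofReal_pow (by positivity), ← ENNReal.ofReal_mul (by positivity),
    ← ENNReal.ofReal_mul (by positivity), ← ENNReal.ofReal_mul (by positivity)]
  refine ENNReal.ofReal_le_ofReal ?_
  rw [← Real.norm_eq_abs, hj]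
  calc (2 * (1 + Fintype.card ι * (‖c‖ * N)) + 1) *
        (‖c‖⁻¹ * (2 * ε * (2 * N) ^ (Fintype.card ι - 1)))
      = 2 * (2 * N) ^ (Fintype.card ι - 1) * (ε * (2 * M + 3 * (1 / ‖c‖))) := by
        simp only [M]; field_simp; ring
    _ ≤ 2 * (2 * N) ^ (Fintype.card ι - 1) * (ε * ((3 + 2 * M) * (1 + 1 / ‖c‖))) := by
        gcongr
        have hM : 0 ≤ 2 * M * (1 / ‖c‖) := by positivity
        linarith
    _ = _ := by ring

lemma ae_eventually_notMem_of_summable {X κ : Type*} [MeasurableSpace X] [Countable κ]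
    {μ : Measure X} {s : κ → Set X} {g : κ → ℝ} (hg : Summable g)
    (h : ∀ᶠ i in cofinite, μ (s i) ≤ ENNReal.ofReal (g i)) :
    ∀ᵐ x ∂μ, ∀ᶠ i in cofinite, x ∉ s i := by
  have hsum : ∑' i, μ {x ∈ s i | μ (s i) ≤ ENNReal.ofReal (g i)} ≠ ⊤ := by
    refine ne_top_of_le_ne_top hg.tsum_ofReal_ne_top (ENNReal.tsum_le_tsum fun i => ?_)
    by_cases hi : μ (s i) ≤ ENNReal.ofReal (g i) <;> simp [hi]
  filter_upwards [ae_finite_setOfPred_mem hsum] with x hx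
  filter_upwards [h, hx.compl_mem_cofinite] with i hi hxi hxs using hxi ⟨hxs, hi⟩

end Volume

section NearSet

variable {m : ℕ} (α : Fin m → ℝ) (b : ℝ) {N u w : ℝ}

/-- The points `x` of the ball of radius `N` for which `q` witnesses the multiplicative
approximability to order `u` of the point `(x, α · x + b)`. -/
def nearSet (N u : ℝ) (q : Fin (m + 1) → ℤ) : Set (Fin m → ℝ) :=
  {x ∈ closedBall 0 N | ‖∑ i, q i • toTorus (hyperplaneParam α b x) i‖ < prodTimes q ^ (-u)}

variable {α b}

lemma norm_zsmul_le_of_mem_nearSet {q : Fin (m + 1) → ℤ} {x : Fin m → ℝ}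
    (hx : x ∈ nearSet α b N u q) :
    ‖q (Fin.last m) • toTorus (Fin.snoc α b : Fin (m + 1) → ℝ)‖
      ≤ prodTimes q ^ (-u) + (m * N + 1) * ‖linearPart α q‖ := by
  obtain ⟨hxN, hx⟩ := hx
  rw [sum_zsmul_toTorus_hyperplaneParam] at hx
  have hlin : ‖((∑ i, linearPart α q i * x i : ℝ) : UnitAddCircle)‖
      ≤ m * N * ‖linearPart α q‖ := by
    refine (norm_coe_unitAddCircle_le _).trans ((abs_sum_mul_le _ x).trans ?_)
    rw [Fintype.card_fin, mul_assoc, mul_comm N]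
    gcongr
    exact mem_closedBall_zero_iff.1 hxN
  have hN : 0 ≤ m * N * ‖linearPart α q‖ := (norm_nonneg _).trans hlin
  have hprod : 0 < prodTimes q ^ (-u) := (norm_nonneg _).trans_lt hx
  rw [norm_zsmul_toTorus_snoc, ← toTorus_linearPart, add_mul, one_mul]
  refine max_le ((norm_toTorus_le _).trans (by linarith)) ?_
  have htri := norm_sub_le_norm_add (q (Fin.last m) • (b : UnitAddCircle))
    ((∑ i, linearPart α q i * x i : ℝ) : UnitAddCircle)
  rw [add_comm (q _ • _)] at htri
  linarith [norm_nonneg (linearPart α q)]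

variable (α) in
lemma eventually_of_eventually_last {P : ℤ → Prop} (h : ∀ᶠ k in cofinite, P k) :
    ∀ᶠ q : Fin (m + 1) → ℤ in cofinite, ‖linearPart α q‖ < 1 / 2 → P (q (Fin.last m)) := by
  refine Set.Finite.of_injOn (f := fun q => q (Fin.last m)) (t := {k | ¬P k}) ?_ ?_ h
  · intro q hq
    exact (Classical.not_imp.1 hq).2
  · intro q hq q' hq'
    exact linearPart_injOn_last α (Classical.not_imp.1 hq).1 (Classical.not_imp.1 hq').1

variable (α) in
lemma summable_indicator_comp_last {f : ℤ → ℝ} (hf : Summable f) :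
    Summable ({q | ‖linearPart α q‖ < 1 / 2}.indicator fun q => f (q (Fin.last m))) := by
  have hinj : Function.Injective fun q : {q | ‖linearPart α q‖ < 1 / 2} => q.1 (Fin.last m) :=
    fun q q' h => Subtype.ext (linearPart_injOn_last α q.2 q'.2 h)
  exact summable_subtype_iff_indicator.1 (hf.comp_injective hinj)

lemma exists_eventually_prodTimes_rpow_div_norm_linearPart_le
    (h : ¬IsApproximable (toTorus (Fin.snoc α b : Fin (m + 1) → ℝ)) w) (hu : 0 ≤ u)
    (hwu : w < ((hammingNorm α + 1 : ℕ) : ℝ) * u) (N : ℝ) :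
    ∃ C : ℝ, ∀ᶠ q : Fin (m + 1) → ℤ in cofinite, ‖linearPart α q‖ < 1 / 2 →
      (nearSet α b N u q).Nonempty → linearPart α q ≠ 0 ∧
        prodTimes q ^ (-u) / ‖linearPart α q‖
          ≤ C * (|(q (Fin.last m) : ℝ)| ^ (-(((hammingNorm α + 1 : ℕ) : ℝ) * u))
            / ‖q (Fin.last m) • toTorus (Fin.snoc α b : Fin (m + 1) → ℝ)‖) := by
  obtain ⟨C, hC, hprod⟩ := exists_prodTimes_rpow_le_mul_rpow α hu
  refine ⟨C * (2 * (m * N + 1)), ?_⟩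
  filter_upwards [eventually_of_eventually_last α
    ((eventually_mul_rpow_le_norm_zsmul h hwu (2 * C)).and (eventually_cofinite_ne 0))]
    with q hq hsmall ⟨x, hx⟩
  obtain ⟨hlarge, hlast⟩ := hq hsmall
  have hpos := norm_zsmul_pos h hlast
  have hε := hprod q (by linarith) hlast
  set κ : ℝ := ‖q (Fin.last m) • toTorus (Fin.snoc α b : Fin (m + 1) → ℝ)‖
  have hκ : κ ≤ 2 * (m * N + 1) * ‖linearPart α q‖ := by
    linarith [norm_zsmul_le_of_mem_nearSet hx]
  have hne : linearPart α q ≠ 0 := fun h0 => by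
    rw [h0, norm_zero, mul_zero] at hκ
    exact hκ.not_gt hpos
  refine ⟨hne, ?_⟩
  have hlin : 0 < ‖linearPart α q‖ := norm_pos_iff.2 hne
  have hinv : 1 / ‖linearPart α q‖ ≤ 2 * (m * N + 1) / κ := by
    rw [div_le_div_iff₀ hlin hpos, one_mul]
    exact hκ
  calc prodTimes q ^ (-u) / ‖linearPart α q‖
      = prodTimes q ^ (-u) * (1 / ‖linearPart α q‖) := div_eq_mul_one_div _ _
    _ ≤ C * |(q (Fin.last m) : ℝ)| ^ (-(((hammingNorm α + 1 : ℕ) : ℝ) * u))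
        * (2 * (m * N + 1) / κ) := by gcongr
    _ = _ := by ring

lemma ae_eventually_notMem_nearSet
    (h : ¬IsApproximable (toTorus (Fin.snoc α b : Fin (m + 1) → ℝ)) w) (hu : 1 < u)
    (hwu : w < ((hammingNorm α + 1 : ℕ) : ℝ) * u) (hN : 0 ≤ N) :
    ∀ᵐ x : Fin m → ℝ, ∀ᶠ q in cofinite, x ∉ nearSet α b N u q := by
  obtain ⟨K, hK, hvol⟩ := exists_volume_norm_add_lt_le (Fin m) hN
  obtain ⟨C, hC⟩ := exists_eventually_prodTimes_rpow_div_norm_linearPart_le h (by linarith) hwu N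
  have ht : 1 < ((hammingNorm α + 1 : ℕ) : ℝ) * u :=
    hu.trans_le (le_mul_of_one_le_left (by linarith) (by simp))
  refine ae_eventually_notMem_of_summable
    (((summable_prodTimes_rpow (m + 1) hu).mul_left (K * 3)).add
      ((summable_indicator_comp_last α (summable_abs_rpow_div_norm_zsmul
        (fun k => norm_torus_le_one _) h hwu ht)).mul_left (K * C))) ?_
  filter_upwards [hC] with q hq
  have hε : 0 < prodTimes q ^ (-u) := Real.rpow_pos_of_pos (one_pos.trans_le (one_le_prodTimes q)) _
  have hε1 : prodTimes q ^ (-u) ≤ 1 :=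
    Real.rpow_le_one_of_one_le_of_nonpos (one_le_prodTimes q) (by linarith)
  have hnear : linearPart α q ≠ 0 → volume (nearSet α b N u q)
      ≤ ENNReal.ofReal (K * (prodTimes q ^ (-u) + prodTimes q ^ (-u) / ‖linearPart α q‖)) :=
    fun hne => by
      simp only [nearSet, sum_zsmul_toTorus_hyperplaneParam]
      simpa only [mul_add, mul_one, mul_one_div] using hvol _ _ _ hne hε.le hε1
  by_cases hsmall : q ∈ {q | ‖linearPart α q‖ < 1 / 2}
  · rcases (nearSet α b N u q).eq_empty_or_nonempty with hempty | hnonempty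
    · simp [hempty]
    obtain ⟨hne, hle⟩ := hq hsmall hnonempty
    refine (hnear hne).trans (ENNReal.ofReal_le_ofReal ?_)
    rw [indicator_of_mem hsmall, mul_assoc, mul_assoc, ← mul_add]
    gcongr
    linarith
  · have hhalf : 1 / 2 ≤ ‖linearPart α q‖ := not_lt.1 hsmall
    refine (hnear (norm_pos_iff.1 (by linarith))).trans (ENNReal.ofReal_le_ofReal ?_)
    rw [indicator_of_notMem hsmall, mul_zero, add_zero, mul_assoc]
    gcongr
    have hdiv : prodTimes q ^ (-u) / ‖linearPart α q‖ ≤ prodTimes q ^ (-u) / (1 / 2) := by gcongr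
    linarith

lemma ae_not_isMulApproximable_hyperplaneParam
    (h : ¬IsApproximable (toTorus (Fin.snoc α b : Fin (m + 1) → ℝ)) w) (hu : 1 < u)
    (hwu : w < ((hammingNorm α + 1 : ℕ) : ℝ) * u) :
    ∀ᵐ x : Fin m → ℝ, ¬IsMulApproximable (toTorus (hyperplaneParam α b x)) u := by
  filter_upwards [ae_all_iff.2 fun N : ℕ => ae_eventually_notMem_nearSet h hu hwu N.cast_nonneg]
    with x hx
  obtain ⟨N, hN⟩ := exists_nat_ge ‖x‖
  refine not_frequently.2 ((hx N).mono fun q hq hlt => hq ⟨?_, hlt⟩)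
  exact mem_closedBall_zero_iff.2 hN

end NearSet

section Exponent

variable {m : ℕ} (α : Fin m → ℝ) (b : ℝ)

lemma mul_sigmaV_le_omegaT_hyperplaneParam (x : Fin m → ℝ) :
    (((m + 1 : ℝ) / (hammingNorm α + 1 : ℝ) : ℝ) : EReal)
        * sigmaV (Fin.snoc α b : Fin (m + 1) → ℝ)
      ≤ omegaT (hyperplaneParam α b x) := by
  have hratio : 0 < (((m + 1 : ℝ) / (hammingNorm α + 1 : ℝ) : ℝ) : EReal) :=
    EReal.coe_pos.2 (by positivity)
  rw [mul_comm, ← EReal.le_div_iff_mul_le hratio (EReal.coe_ne_top _), sigmaV_eq_iSup]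
  refine iSup₂_le fun v hv => ?_
  rw [EReal.le_div_iff_mul_le hratio (EReal.coe_ne_top _), ← EReal.coe_mul,
    ← EReal.ge_of_forall_gt_iff_ge]
  intro c hc
  rcases le_or_gt c 0 with hc0 | hc0
  · exact (EReal.coe_nonpos.2 hc0).trans ((Nat.cast_nonneg' _).trans (natCast_le_omegaT _))
  refine coe_le_omegaT (hv.isMulApproximable_hyperplaneParam (by positivity) ?_ x)
  rw [EReal.coe_lt_coe_iff, ← mul_div_assoc, lt_div_iff₀ (by positivity)] at hc
  push_cast
  rwa [← mul_div_assoc, div_lt_iff₀ (by positivity), mul_comm]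

lemma ae_omegaT_hyperplaneParam_le {v : ℝ} (hm : ((m + 1 : ℕ) : EReal) < v)
    (hv : (((m + 1 : ℝ) / (hammingNorm α + 1 : ℝ) : ℝ) : EReal)
      * sigmaV (Fin.snoc α b : Fin (m + 1) → ℝ) < v) :
    ∀ᵐ x : Fin m → ℝ, omegaT (hyperplaneParam α b x) ≤ v := by
  have hratio : 0 < (((m + 1 : ℝ) / (hammingNorm α + 1 : ℝ) : ℝ) : EReal) :=
    EReal.coe_pos.2 (by positivity)
  have hu : 1 < v / ((m + 1 : ℕ) : ℝ) :=
    (one_lt_div (by positivity)).2 (EReal.coe_lt_coe_iff.1 (by simpa using hm))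
  rw [mul_comm, ← EReal.lt_div_iff hratio (EReal.coe_ne_top _), ← EReal.coe_div] at hv
  obtain ⟨w, hσw, hwv⟩ := EReal.lt_iff_exists_real_btwn.1 hv
  have hwu : w < ((hammingNorm α + 1 : ℕ) : ℝ) * (v / ((m + 1 : ℕ) : ℝ)) := by
    refine (EReal.coe_lt_coe_iff.1 hwv).trans_eq ?_
    push_cast
    field_simp
  filter_upwards [ae_not_isMulApproximable_hyperplaneParam
    (not_isApproximable_of_sigmaV_lt hσw) hu hwu] with x hx using omegaT_le_coe hx

lemma ae_omegaT_hyperplaneParam_eq :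
    ∀ᵐ x : Fin m → ℝ, omegaT (hyperplaneParam α b x)
      = max ((m + 1 : ℕ) : EReal) ((((m + 1 : ℝ) / (hammingNorm α + 1 : ℝ) : ℝ) : EReal)
        * sigmaV (Fin.snoc α b : Fin (m + 1) → ℝ)) := by
  set B := max ((m + 1 : ℕ) : EReal) ((((m + 1 : ℝ) / (hammingNorm α + 1 : ℝ) : ℝ) : EReal)
    * sigmaV (Fin.snoc α b : Fin (m + 1) → ℝ))
  have hle : ∀ᵐ x : Fin m → ℝ, omegaT (hyperplaneParam α b x) ≤ B := by
    refine (ae_le_const_iff_forall_gt_measure_zero _ _).2 fun c hc => ?_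
    obtain ⟨v, hBv, hvc⟩ := EReal.lt_iff_exists_real_btwn.1 hc
    obtain ⟨hm, hv⟩ := max_lt_iff.1 hBv
    refine measure_mono_null (fun x hx => ?_) (ae_iff.1 (ae_omegaT_hyperplaneParam_le α b hm hv))
    exact not_le.2 (hvc.trans_le hx)
  filter_upwards [hle] with x hx
  exact hx.antisymm (max_le (natCast_le_omegaT _) (mul_sigmaV_le_omegaT_hyperplaneParam α b x))

lemma measurableEmbedding_hyperplaneParam : MeasurableEmbedding (hyperplaneParam α b) := by
  have hinit : Function.LeftInverse (fun y : Fin (m + 1) → ℝ => fun i : Fin m => y i.castSucc)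
      (hyperplaneParam α b) := fun x => by ext i; simp [hyperplaneParam]
  refine (hinit.isClosedEmbedding (by fun_prop) (continuous_pi fun i => ?_)).measurableEmbedding
  refine Fin.lastCases ?_ (fun j => ?_) i <;> simp only [hyperplaneParam, Fin.snoc_last,
    Fin.snoc_castSucc] <;> fun_prop

end Exponent

section ZeroExtension

variable {m r : ℕ} (hrm : r ≤ m) (a : Fin r → ℝ) (b : ℝ)

/-- The vector `(a₁, …, aᵣ, 0, …, 0)` in `ℝᵐ`. -/
noncomputable def zeroExtend : Fin m → ℝ :=
  Function.extend (Fin.castLE hrm) a 0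

lemma zeroExtend_castLE (i : Fin r) : zeroExtend hrm a (Fin.castLE hrm i) = a i :=
  (Fin.castLE_injective hrm).extend_apply a _ i

lemma zeroExtend_of_notMem_range {i : Fin m} (hi : i ∉ range (Fin.castLE hrm)) :
    zeroExtend hrm a i = 0 :=
  Function.extend_apply' a _ i hi

lemma hyperplaneParam_zeroExtend : hyperplaneParam (zeroExtend hrm a) b
    = fun x : Fin m → ℝ => Fin.snoc x (∑ i, a i * x (Fin.castLE hrm i) + b) := by
  funext x
  rw [hyperplaneParam, Fintype.sum_of_injective (Fin.castLE hrm) (Fin.castLE_injective hrm)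
    (fun i => a i * x (Fin.castLE hrm i))]
  · exact fun i hi => by rw [zeroExtend_of_notMem_range hrm a hi, zero_mul]
  · exact fun i => by rw [zeroExtend_castLE]

lemma hammingNorm_zeroExtend (ha : ∀ i, a i ≠ 0) : hammingNorm (zeroExtend hrm a) = r := by
  have hsupp : ({i | zeroExtend hrm a i ≠ 0} : Finset (Fin m))
      = Finset.univ.map (Fin.castLEEmb hrm) := by
    ext i
    by_cases hi : i ∈ range (Fin.castLE hrm)
    · obtain ⟨j, rfl⟩ := hi
      simp [zeroExtend_castLE, ha]
    · simpa [zeroExtend_of_notMem_range hrm a hi] using not_exists.1 hi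
  rw [hammingNorm, hsupp, Finset.card_map, Finset.card_fin]

lemma norm_zsmul_toTorus_zeroExtend (k : ℤ) :
    ‖k • toTorus (zeroExtend hrm a)‖ = ‖k • toTorus a‖ := by
  refine le_antisymm ((pi_norm_le_iff_of_nonneg (norm_nonneg _)).2 fun i => ?_)
    ((pi_norm_le_iff_of_nonneg (norm_nonneg _)).2 fun j => ?_)
  · by_cases hi : i ∈ range (Fin.castLE hrm)
    · obtain ⟨j, rfl⟩ := hi
      simpa [zeroExtend_castLE] using norm_le_pi_norm (k • toTorus a) j
    · simp [zeroExtend_of_notMem_range hrm a hi]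
  · simpa [zeroExtend_castLE] using
      norm_le_pi_norm (k • toTorus (zeroExtend hrm a)) (Fin.castLE hrm j)

lemma sigmaV_snoc_zeroExtend : sigmaV (Fin.snoc (zeroExtend hrm a) b : Fin (m + 1) → ℝ)
    = sigmaV (Fin.snoc a b : Fin (r + 1) → ℝ) :=
  sigmaV_congr fun k => by simp only [norm_zsmul_toTorus_snoc, norm_zsmul_toTorus_zeroExtend]

end ZeroExtension

theorem stmt5_general {m : ℕ} (α : Fin m → ℝ) (b : ℝ) :
    omegaTMeas (Measure.map (hyperplaneParam α b) volume)
      = max ((m + 1 : ℕ) : EReal) ((((m + 1 : ℝ) / (hammingNorm α + 1 : ℝ) : ℝ) : EReal)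
        * sigmaV (Fin.snoc α b : Fin (m + 1) → ℝ)) := by
  have hemb := measurableEmbedding_hyperplaneParam α b
  refine omegaTMeas_eq_of_ae_eq ?_ (hemb.ae_map_iff.2 (ae_omegaT_hyperplaneParam_eq α b))
  exact (Measure.map_ne_zero_iff hemb.measurable.aemeasurable).2 (NeZero.ne _)

theorem stmt5 (m r : ℕ) (hm : 1 ≤ m) (hrm : r ≤ m) (a : Fin r → ℝ)
    (ha : ∀ i, a i ≠ 0) (b : ℝ) :
    omegaTMeas (Measure.map
        (fun x : Fin m → ℝ => Fin.snoc x (∑ i, a i * x (Fin.castLE hrm i) + b)) volume)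
      = max (((m + 1 : ℕ) : EReal))
          ((((m + 1 : ℝ) / (r + 1 : ℝ) : ℝ) : EReal) * sigmaV (Fin.snoc a b)) := by
  rw [← hyperplaneParam_zeroExtend, stmt5_general, hammingNorm_zeroExtend hrm a ha,
    sigmaV_snoc_zeroExtend]
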